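/- arXiv:2003.05537 — 2 statements merged into one kernel-verified Lean document; each statement's English description precedes it below -/
import Mathlib

section
/- Let I be a nonzero proper ideal of a Dedekind domain R and n a positive integer. Then I is an n-semiprimary ideal of R if and only if I = P^k, where P = √I is a prime ideal of R and k is a positive integer with k ≤ n. -/
/-- A proper ideal `I` of a commutative ring `R` is an `n`-semiprimary ideal of `R` if
whenever `x^n * y^n ∈ I` for `x, y ∈ R`, then `x^n ∈ I` or `y^n ∈ I`. -/
def IsNSemiprimary {R : Type*} [CommRing R] (I : Ideal R) (n : ℕ) : Prop :=
  I ≠ ⊤ ∧ ∀ x y : R, x ^ n * y ^ n ∈ I → x ^ n ∈ I ∨ y ^ n ∈ I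

/-!
For `n > 0`, an ideal `I` is `n`-semiprimary exactly when `√I` is prime and every element of `√I`
has its `n`-th power in `I`. Over a Dedekind domain a nonzero ideal with prime radical `P` is a
power `P ^ k`, and an element of `P` outside `P ^ 2` has `n`-th power of `P`-adic valuation exactly
`n`, so the `n`-th powers of all elements of `P` lie in `P ^ k` if and only if `k ≤ n`.
-/

section CommRing

variable {R : Type*} [CommRing R] {I : Ideal R} {n : ℕ}

theorem IsNSemiprimary.pow_mem_of_pow_pow_mem (h : IsNSemiprimary I n) {x : R} {m : ℕ}
    (hx : (x ^ m) ^ n ∈ I) : x ^ n ∈ I := by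
  induction m with
  | zero =>
    have one_mem : (1 : R) ∈ I := by simpa only [pow_zero, one_pow] using hx
    exact absurd (I.eq_top_iff_one.mpr one_mem) h.1
  | succ m ih =>
    rw [pow_succ, mul_pow] at hx
    exact (h.2 _ _ hx).elim ih id

theorem IsNSemiprimary.pow_mem_of_mem_radical (h : IsNSemiprimary I n) (hn : 0 < n) {x : R}
    (hx : x ∈ I.radical) : x ^ n ∈ I := by
  obtain ⟨m, hm⟩ := hx
  exact h.pow_mem_of_pow_pow_mem (I.pow_mem_of_mem hm n hn)

theorem IsNSemiprimary.isPrime_radical (h : IsNSemiprimary I n) (hn : 0 < n) :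
    I.radical.IsPrime where
  ne_top' := mt Ideal.radical_eq_top.mp h.1
  mem_or_mem' {x y} hxy := by
    have hpow : x ^ n * y ^ n ∈ I := mul_pow x y n ▸ h.pow_mem_of_mem_radical hn hxy
    exact (h.2 x y hpow).imp (fun hx => ⟨n, hx⟩) (fun hy => ⟨n, hy⟩)

theorem isNSemiprimary_of_isPrime_radical (hP : I.radical.IsPrime)
    (hpow : ∀ x ∈ I.radical, x ^ n ∈ I) : IsNSemiprimary I n := by
  refine ⟨mt Ideal.radical_eq_top.mpr hP.ne_top, fun x y hxy => ?_⟩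
  exact (hP.mem_or_mem (Ideal.le_radical hxy)).imp
    (fun hx => hpow x (hP.mem_of_pow_mem n hx)) (fun hy => hpow y (hP.mem_of_pow_mem n hy))

theorem isNSemiprimary_iff_isPrime_radical_and_forall_pow_mem (hn : 0 < n) :
    IsNSemiprimary I n ↔ I.radical.IsPrime ∧ ∀ x ∈ I.radical, x ^ n ∈ I :=
  ⟨fun h => ⟨h.isPrime_radical hn, fun _ => h.pow_mem_of_mem_radical hn⟩,
    fun h => isNSemiprimary_of_isPrime_radical h.1 h.2⟩

end CommRing

section IsDedekindDomain

variable {R : Type*} [CommRing R] [IsDedekindDomain R]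

theorem exists_eq_radical_pow_of_isPrime_radical {I : Ideal R} (hI : I ≠ ⊥)
    (hP : I.radical.IsPrime) : ∃ k : ℕ, 0 < k ∧ I = I.radical ^ k := by
  have radical_ne_bot : I.radical ≠ ⊥ := ne_bot_of_le_ne_bot hI Ideal.le_radical
  obtain ⟨m, hm⟩ := I.exists_radical_pow_le_of_fg I.radical.fg_of_isNoetherianRing
  obtain ⟨k, -, hk⟩ :=
    (dvd_prime_pow (Ideal.prime_of_isPrime radical_ne_bot hP) m).mp (Ideal.dvd_iff_le.mpr hm)
  have hIk : I = I.radical ^ k := associated_iff_eq.mp hk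
  refine ⟨k, Nat.pos_of_ne_zero fun hk0 => ?_, hIk⟩
  have I_eq_top : I = ⊤ := by rwa [hk0, pow_zero, Ideal.one_eq_top] at hIk
  exact hP.ne_top (Ideal.radical_eq_top.mpr I_eq_top)

variable {P : Ideal R} {k n : ℕ}

theorem pow_mem_prime_pow_iff_le_mul (hP0 : P ≠ ⊥) (hP : P.IsPrime) {x : R} {m : ℕ}
    (hx : x ∈ P ^ m) (hx' : x ∉ P ^ (m + 1)) : x ^ n ∈ P ^ k ↔ k ≤ n * m := by
  have emultiplicity_eq : emultiplicity P (Ideal.span {x}) = m :=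
    emultiplicity_eq_coe.mpr ⟨Ideal.dvd_span_singleton.mpr hx, mt Ideal.dvd_span_singleton.mp hx'⟩
  rw [← Ideal.dvd_span_singleton, ← Ideal.span_singleton_pow, pow_dvd_iff_le_emultiplicity,
    emultiplicity_pow (Ideal.prime_of_isPrime hP0 hP), emultiplicity_eq]
  norm_cast

theorem forall_pow_mem_prime_pow_iff_le (hP0 : P ≠ ⊥) (hP : P.IsPrime) :
    (∀ x ∈ P, x ^ n ∈ P ^ k) ↔ k ≤ n := by
  refine ⟨fun h => ?_, fun hkn x hx => Ideal.pow_le_pow_right hkn (Ideal.pow_mem_pow hx n)⟩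
  obtain ⟨x, hx, hx'⟩ := P.exists_mem_pow_notMem_pow_succ hP0 hP.ne_top 1
  have hxn : x ^ n ∈ P ^ k := h x (by rwa [pow_one] at hx)
  simpa only [mul_one] using (pow_mem_prime_pow_iff_le_mul hP0 hP hx hx').mp hxn

end IsDedekindDomain

/-- Let `I` be a nonzero proper ideal of a Dedekind domain `R` and `n` a positive integer.
Then `I` is an `n`-semiprimary ideal of `R` if and only if `I = P^k`, where `P = √I` is a
prime ideal of `R` and `k` is a positive integer with `k ≤ n`. -/
theorem isNSemiprimary_iff_dedekind {R : Type*} [CommRing R] [IsDedekindDomain R]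
    (I : Ideal R) (hI0 : I ≠ ⊥) (hI : I ≠ ⊤) (n : ℕ) (hn : 0 < n) :
    IsNSemiprimary I n ↔
      I.radical.IsPrime ∧ ∃ k : ℕ, 0 < k ∧ k ≤ n ∧ I = I.radical ^ k := by
  rw [isNSemiprimary_iff_isPrime_radical_and_forall_pow_mem hn]
  refine and_congr_right fun hP => ?_
  have forall_pow_mem_iff {k : ℕ} (hk : I = I.radical ^ k) :
      (∀ x ∈ I.radical, x ^ n ∈ I) ↔ k ≤ n := by
    rw [← forall_pow_mem_prime_pow_iff_le (ne_bot_of_le_ne_bot hI0 Ideal.le_radical) hP, ← hk]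
  constructor
  · intro hpow
    obtain ⟨k, hk0, hk⟩ := exists_eq_radical_pow_of_isPrime_radical hI0 hP
    exact ⟨k, hk0, (forall_pow_mem_iff hk).mp hpow, hk⟩
  · rintro ⟨k, -, hkn, hk⟩
    exact (forall_pow_mem_iff hk).mpr hkn
end

section
/- Let I be a proper ideal of a commutative ring R, let M be an R-module, and let S = IM be the corresponding submodule of M. If I is an n-semiprimary ideal of R, then I (+) S is an (n+1)-semiprimary ideal of the idealization R(+)M. -/
/-!
For `n > 0`, an ideal is `n`-semiprimary exactly when its radical is prime and consists of elements
whose `n`-th power lies in the ideal. The radical of `I (+) S` is the preimage of the radical of `I`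
under the first projection, hence prime. Since `(a, m) ^ (n + 1)` is
`(a ^ (n + 1), (n + 1) a ^ n m)`, it lies in `I (+) S` as soon as `a ^ n ∈ I`; the second
coordinate is what costs the extra power.
-/

namespace IsNSemiprimary

variable {R : Type*} [CommRing R] {I : Ideal R} {n : ℕ}

theorem pow_mem_of_pow_pow_mem_s11 (hI : IsNSemiprimary I n) {x : R} {k : ℕ}
    (hx : (x ^ k) ^ n ∈ I) : x ^ n ∈ I := by
  induction k with
  | zero =>
    rw [pow_zero, one_pow] at hx
    exact absurd (I.eq_top_of_isUnit_mem hx isUnit_one) hI.1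
  | succ k ih =>
    rw [pow_succ, mul_pow] at hx
    exact (hI.2 _ _ hx).elim ih id

theorem pow_mem_of_mem_radical_s11 (hI : IsNSemiprimary I n) (hn : 0 < n) {x : R}
    (hx : x ∈ I.radical) : x ^ n ∈ I := by
  obtain ⟨k, hk⟩ := hx
  exact hI.pow_mem_of_pow_pow_mem_s11 (I.pow_mem_of_mem hk n hn)

theorem isPrime_radical_s11 (hI : IsNSemiprimary I n) (hn : 0 < n) : I.radical.IsPrime where
  ne_top' := mt Ideal.radical_eq_top.1 hI.1
  mem_or_mem' {x y} hxy := by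
    have hmul : x ^ n * y ^ n ∈ I := mul_pow x y n ▸ hI.pow_mem_of_mem_radical_s11 hn hxy
    exact (hI.2 x y hmul).imp (⟨n, ·⟩) (⟨n, ·⟩)

theorem of_isPrime_radical (hprime : I.radical.IsPrime) (hpow : ∀ x ∈ I.radical, x ^ n ∈ I) :
    IsNSemiprimary I n := by
  refine ⟨mt Ideal.radical_eq_top.2 hprime.ne_top, fun x y hxy ↦ ?_⟩
  have hmul : x * y ∈ I.radical := ⟨n, (mul_pow x y n).symm ▸ hxy⟩
  exact (hprime.mem_or_mem hmul).imp (hpow x) (hpow y)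

end IsNSemiprimary

section Idealization

open TrivSqZeroExt

variable {R M : Type*} [CommSemiring R] [AddCommMonoid M]
  [Module R M] [Module Rᵐᵒᵖ M] [IsCentralScalar R M]
  {I : Ideal R} {S : Submodule R M} {J : Ideal (TrivSqZeroExt R M)}

theorem smul_mem_of_idealization
    (hJ : ∀ x : TrivSqZeroExt R M, x ∈ J ↔ x.fst ∈ I ∧ x.snd ∈ S)
    {a : R} (ha : a ∈ I) (m : M) : a • m ∈ S := by
  have hinl : (inl a : TrivSqZeroExt R M) ∈ J := (hJ _).2 ⟨ha, S.zero_mem⟩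
  have hinr : (inr (a • m) : TrivSqZeroExt R M) ∈ J :=
    inl_mul_inr a m ▸ J.mul_mem_right (inr m) hinl
  exact ((hJ _).1 hinr).2

theorem pow_succ_mem_idealization
    (hJ : ∀ x : TrivSqZeroExt R M, x ∈ J ↔ x.fst ∈ I ∧ x.snd ∈ S)
    {x : TrivSqZeroExt R M} {k : ℕ} (hx : x.fst ^ k ∈ I) : x ^ (k + 1) ∈ J := by
  rw [hJ, fst_pow, snd_pow, Nat.pred_succ]
  exact ⟨I.pow_mem_of_pow_mem hx k.le_succ, S.nsmul_mem (smul_mem_of_idealization hJ hx _) _⟩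

theorem radical_idealization
    (hJ : ∀ x : TrivSqZeroExt R M, x ∈ J ↔ x.fst ∈ I ∧ x.snd ∈ S) :
    J.radical = I.radical.comap (fstHom R R M) := by
  ext x
  constructor
  · rintro ⟨k, hk⟩
    exact ⟨k, fst_pow x k ▸ ((hJ _).1 hk).1⟩
  · rintro ⟨k, hk⟩
    exact ⟨k + 1, pow_succ_mem_idealization hJ hk⟩

end Idealization

theorem idealization_isNSemiprimary_general {R M : Type*} [CommRing R] [AddCommGroup M]
    [Module R M] [Module Rᵐᵒᵖ M] [IsCentralScalar R M]
    {n : ℕ} (hn : 0 < n) {I : Ideal R} {S : Submodule R M} {J : Ideal (TrivSqZeroExt R M)}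
    (hJ : ∀ x : TrivSqZeroExt R M, x ∈ J ↔ x.fst ∈ I ∧ x.snd ∈ S)
    (hI : IsNSemiprimary I n) :
    IsNSemiprimary J (n + 1) := by
  have hrad : J.radical = I.radical.comap (TrivSqZeroExt.fstHom R R M) := radical_idealization hJ
  have hprime : I.radical.IsPrime := hI.isPrime_radical_s11 hn
  refine .of_isPrime_radical (hrad ▸ hprime.comap _) fun x hx ↦ ?_
  rw [hrad] at hx
  exact pow_succ_mem_idealization hJ (hI.pow_mem_of_mem_radical_s11 hn hx)

/-- Let `I` be a proper ideal of a commutative ring `R`, let `M` be an `R`-module, and let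
`S = IM` be the corresponding submodule of `M`. If `I` is an `n`-semiprimary ideal of `R`,
then the ideal `I (+) S = {(a, s) | a ∈ I, s ∈ S}` is an `(n+1)`-semiprimary ideal of the
idealization `R (+) M` (realized as `TrivSqZeroExt R M`). -/
theorem idealization_isNSemiprimary {R M : Type*} [CommRing R] [AddCommGroup M]
    [Module R M] [Module Rᵐᵒᵖ M] [IsCentralScalar R M]
    (n : ℕ) (hn : 0 < n) (I : Ideal R) (S : Submodule R M)
    (hS : S = I • (⊤ : Submodule R M))
    (J : Ideal (TrivSqZeroExt R M))
    (hJ : ∀ x : TrivSqZeroExt R M, x ∈ J ↔ x.fst ∈ I ∧ x.snd ∈ S)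
    (hI : IsNSemiprimary I n) :
    IsNSemiprimary J (n + 1) :=
  idealization_isNSemiprimary_general hn hJ hI
end
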